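/- Let 𝔤 be a finite-dimensional complex simple Lie algebra with root system Φ, base Δ, and let α ∈ Δ be a long simple root; set Σ_q := {α} ∪ N(α), where N(α) is the set of Dynkin neighbors of α. Then every root δ with ht_{Σ_q}(δ) = 2 satisfies n_α(δ) = 1 and Σ_{γ∈N(α)} n_γ(δ) = 1, and moreover δ − α ∈ Φ. -/

import Mathlib

open scoped RealInnerProductSpace Classical

/-!
Write `⟨x, y⟩ = 2 ⟪x, y⟫ / ⟪y, y⟫`. Since `α` is long, Cauchy–Schwarz gives `|⟨β, α⟩| ≤ 2` for
every root `β` not orthogonal to `α`, and `⟨β, α⟩ = -2` only for `β = -α`. For a Dynkin neighbor `γ`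
the integer `⟨γ, α⟩` is also negative, because the coefficients of the reflected root
`γ - ⟨γ, α⟩ α` have a common sign; hence `⟨γ, α⟩ = -1`. So a root `δ` with `a = n_α(δ)` and
`b = ∑_{γ ∈ N(α)} n_γ(δ)` satisfies `⟨δ, α⟩ = 2 a - b`. If `a + b = 2`, this is `3 a - 2`, and the
bound leaves only `a = 0`, which would force `δ = -α`, and `a = 1`, where `δ - α` is the reflection
of `δ` in `α`.
-/

section CartanNumber

variable {E : Type*} [NormedAddCommGroup E] [InnerProductSpace ℝ E]

/-- The Cartan number `⟨x, y⟩ = 2 (x, y) / (y, y)`: the reflection in `y` sends `x` to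
`x - ⟨x, y⟩ y`. It takes the junk value `0` at `y = 0`. -/
noncomputable def cartanNumber (x y : E) : ℝ := 2 * ⟪x, y⟫ / ⟪y, y⟫

variable {x y : E}

theorem norm_le_norm_of_inner_self_le (h : ⟪x, x⟫ ≤ ⟪y, y⟫) : ‖x‖ ≤ ‖y‖ := by
  rw [norm_eq_sqrt_real_inner x, norm_eq_sqrt_real_inner y]
  exact Real.sqrt_le_sqrt h

theorem cartanNumber_self (hy : y ≠ 0) : cartanNumber y y = 2 :=
  mul_div_cancel_right₀ 2 (inner_self_ne_zero.mpr hy)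

theorem cartanNumber_eq_zero_of_inner_eq_zero (h : ⟪x, y⟫ = 0) : cartanNumber x y = 0 := by
  rw [cartanNumber, h, mul_zero, zero_div]

theorem inner_eq_zero_of_cartanNumber_eq_zero (h : cartanNumber x y = 0) : ⟪x, y⟫ = 0 := by
  rcases eq_or_ne y 0 with rfl | hy
  · exact inner_zero_right x
  · simpa [cartanNumber, hy] using h

theorem cartanNumber_sum_smul {ι : Type*} (s : Finset ι) (c : ι → ℝ) (v : ι → E) (y : E) :
    cartanNumber (∑ i ∈ s, c i • v i) y = ∑ i ∈ s, c i * cartanNumber (v i) y := by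
  simp only [cartanNumber, sum_inner, real_inner_smul_left, Finset.mul_sum, Finset.sum_div]
  exact Finset.sum_congr rfl fun _ _ => by ring

theorem abs_cartanNumber_le_two (hxy : ‖x‖ ≤ ‖y‖) : |cartanNumber x y| ≤ 2 := by
  have cauchy_schwarz : |⟪x, y⟫| ≤ ‖y‖ * ‖y‖ :=
    (abs_real_inner_le_norm x y).trans (by gcongr)
  rw [cartanNumber, real_inner_self_eq_norm_mul_norm, abs_div, abs_mul, abs_two, abs_mul_self]
  exact div_le_of_le_mul₀ (by positivity) zero_le_two (by gcongr)

theorem eq_neg_of_cartanNumber_eq_neg_two (hxy : ‖x‖ ≤ ‖y‖) (h : cartanNumber x y = -2) :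
    x = -y := by
  have hy : ⟪y, y⟫ ≠ 0 := fun hy => by
    rw [cartanNumber, hy, div_zero] at h
    norm_num at h
  have inner_eq : ⟪x, y⟫ = -‖y‖ ^ 2 := by
    rw [cartanNumber, div_eq_iff hy, real_inner_self_eq_norm_sq] at h
    linarith
  refine eq_of_norm_le_re_inner_eq_norm_sq (𝕜 := ℝ) (by rwa [norm_neg]) ?_
  rw [inner_neg_right, inner_eq, norm_neg, neg_neg, RCLike.re_to_real]

end CartanNumber

theorem sub_smul_eq_sum_single_smul {R M : Type*} [Ring R] [AddCommGroup M]
    [Module R M] {s : Finset M} {x y : M} (hx : x ∈ s) (hy : y ∈ s) (t : R) :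
    x - t • y = ∑ z ∈ s, (Pi.single x 1 - Pi.single y t : M → R) z • z := by
  simp [Pi.single_apply, sub_smul, hx, hy]

/-- `Δ` is a system of simple roots for `Φ`, and `n β γ` is the coefficient of `γ ∈ Δ` in `β ∈ Φ`.
The coefficients are carried as a total function whose values outside `Φ × Δ` are irrelevant. -/
structure IsSimpleSystem {E : Type*} [AddCommGroup E] [Module ℝ E]
    (Φ : Set E) (Δ : Finset E) (n : E → E → ℤ) : Prop where
  subset : (Δ : Set E) ⊆ Φ
  linearIndepOn : LinearIndepOn ℝ id (Δ : Set E)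
  eq_sum : ∀ β ∈ Φ, β = ∑ γ ∈ Δ, (n β γ : ℝ) • γ
  nonneg_or_nonpos : ∀ β ∈ Φ, (∀ γ ∈ Δ, 0 ≤ n β γ) ∨ (∀ γ ∈ Δ, n β γ ≤ 0)

namespace IsSimpleSystem

variable {E : Type*} [AddCommGroup E] [Module ℝ E] {Φ : Set E} {Δ : Finset E} {n : E → E → ℤ}
  {α β γ : E} {t : ℝ}

theorem ne_zero (hΔ : IsSimpleSystem Φ Δ n) (hα : α ∈ Δ) : α ≠ 0 :=
  hΔ.linearIndepOn.ne_zero hα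

theorem coeff_eq_of_eq_sum (hΔ : IsSimpleSystem Φ Δ n) (hβ : β ∈ Φ) {c : E → ℝ}
    (hc : β = ∑ γ ∈ Δ, c γ • γ) (hγ : γ ∈ Δ) : (n β γ : ℝ) = c γ :=
  linearIndepOn_finset_iffₛ.mp hΔ.linearIndepOn _ _ ((hΔ.eq_sum β hβ).symm.trans hc) γ hγ

theorem coeff_neg_self (hΔ : IsSimpleSystem Φ Δ n) (hα : α ∈ Δ) (h : -α ∈ Φ) :
    n (-α) α = -1 := by
  have expansion : -α = ∑ γ ∈ Δ, (Pi.single α (-1) : E → ℝ) γ • γ := by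
    simp [Pi.single_apply, hα]
  have := hΔ.coeff_eq_of_eq_sum h expansion hα
  rw [Pi.single_eq_same] at this
  exact_mod_cast this

theorem coeff_sub_smul_left (hΔ : IsSimpleSystem Φ Δ n) (hγ : γ ∈ Δ) (hα : α ∈ Δ) (hne : γ ≠ α)
    (h : γ - t • α ∈ Φ) : n (γ - t • α) γ = 1 := by
  simpa [hne] using hΔ.coeff_eq_of_eq_sum h (sub_smul_eq_sum_single_smul hγ hα t) hγ

theorem coeff_sub_smul_right (hΔ : IsSimpleSystem Φ Δ n) (hγ : γ ∈ Δ) (hα : α ∈ Δ) (hne : γ ≠ α)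
    (h : γ - t • α ∈ Φ) : (n (γ - t • α) α : ℝ) = -t := by
  simpa [hne.symm] using hΔ.coeff_eq_of_eq_sum h (sub_smul_eq_sum_single_smul hγ hα t) hα

theorem nonpos_of_sub_smul_mem (hΔ : IsSimpleSystem Φ Δ n) (hγ : γ ∈ Δ) (hα : α ∈ Δ)
    (hne : γ ≠ α) (h : γ - t • α ∈ Φ) : t ≤ 0 := by
  rcases hΔ.nonneg_or_nonpos _ h with nonneg | nonpos
  · have : (0 : ℝ) ≤ n (γ - t • α) α := by exact_mod_cast nonneg α hα
    linarith [hΔ.coeff_sub_smul_right hγ hα hne h]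
  · have := nonpos γ hγ
    rw [hΔ.coeff_sub_smul_left hγ hα hne h] at this
    omega

theorem ne_neg (hΔ : IsSimpleSystem Φ Δ n) (hγ : γ ∈ Δ) (hα : α ∈ Δ) : γ ≠ -α := by
  intro heq
  have hne : γ ≠ α := by
    rintro rfl
    have : IsAddTorsionFree E := .of_isTorsionFree ℝ E
    exact hΔ.ne_zero hγ (self_eq_neg.mp heq)
  have hγΦ : γ ∈ Φ := hΔ.subset hγ
  have coeff_zero : n γ α = 0 := by
    simpa using hΔ.coeff_sub_smul_right (t := 0) hγ hα hne (by simpa using hγΦ)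
  have coeff_neg_one : n γ α = -1 := heq ▸ hΔ.coeff_neg_self hα (heq ▸ hγΦ)
  omega

end IsSimpleSystem

section DynkinNeighbors

variable {E : Type*} [NormedAddCommGroup E] [InnerProductSpace ℝ E]
  {Φ : Set E} {Δ : Finset E} {n : E → E → ℤ} {α β γ : E}

/-- The set `N(α)` of neighbors of `α` in the Dynkin diagram with vertex set `Δ`. -/
noncomputable def dynkinNeighbors (Δ : Finset E) (α : E) : Finset E :=
  Δ.filter fun γ => γ ≠ α ∧ ⟪γ, α⟫ ≠ 0

theorem mem_dynkinNeighbors : γ ∈ dynkinNeighbors Δ α ↔ γ ∈ Δ ∧ γ ≠ α ∧ ⟪γ, α⟫ ≠ 0 :=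
  Finset.mem_filter

theorem notMem_dynkinNeighbors_self : α ∉ dynkinNeighbors Δ α :=
  fun h => (mem_dynkinNeighbors.mp h).2.1 rfl

theorem insert_dynkinNeighbors_subset (hα : α ∈ Δ) : insert α (dynkinNeighbors Δ α) ⊆ Δ :=
  Finset.insert_subset hα (Finset.filter_subset _ _)

theorem inner_eq_zero_of_notMem_insert_dynkinNeighbors (hγ : γ ∈ Δ)
    (h : γ ∉ insert α (dynkinNeighbors Δ α)) : ⟪γ, α⟫ = 0 := by
  rw [Finset.mem_insert, mem_dynkinNeighbors] at h
  tauto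

theorem IsSimpleSystem.cartanNumber_eq_neg_one_of_mem_dynkinNeighbors
    (hΔ : IsSimpleSystem Φ Δ n) (hα : α ∈ Δ) (hγ : γ ∈ dynkinNeighbors Δ α) (hnorm : ‖γ‖ ≤ ‖α‖)
    (hrefl : γ - cartanNumber γ α • α ∈ Φ) (hint : ∃ m : ℤ, cartanNumber γ α = m) :
    cartanNumber γ α = -1 := by
  obtain ⟨hγΔ, hne, hinner⟩ := mem_dynkinNeighbors.mp hγ
  have nonpos := hΔ.nonpos_of_sub_smul_mem hγΔ hα hne hrefl
  have neg_two_le := neg_le_of_abs_le (abs_cartanNumber_le_two hnorm)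
  have ne_zero : cartanNumber γ α ≠ 0 := mt inner_eq_zero_of_cartanNumber_eq_zero hinner
  have ne_neg_two : cartanNumber γ α ≠ -2 :=
    mt (eq_neg_of_cartanNumber_eq_neg_two hnorm) (hΔ.ne_neg hγΔ hα)
  obtain ⟨m, hm⟩ := hint
  rw [hm] at nonpos neg_two_le ne_zero ne_neg_two ⊢
  norm_cast at nonpos neg_two_le ne_zero ne_neg_two ⊢
  omega

theorem IsSimpleSystem.cartanNumber_eq_two_mul_coeff_sub_sum (hΔ : IsSimpleSystem Φ Δ n)
    (hα : α ∈ Δ) (hneighbor : ∀ γ ∈ dynkinNeighbors Δ α, cartanNumber γ α = -1) (hβ : β ∈ Φ) :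
    cartanNumber β α = (2 * n β α - ∑ γ ∈ dynkinNeighbors Δ α, n β γ : ℤ) := by
  have off_support : ∀ γ ∈ Δ, γ ∉ insert α (dynkinNeighbors Δ α) →
      (n β γ : ℝ) * cartanNumber γ α = 0 := fun γ hγ hγN => by
    rw [cartanNumber_eq_zero_of_inner_eq_zero
      (inner_eq_zero_of_notMem_insert_dynkinNeighbors hγ hγN), mul_zero]
  calc cartanNumber β α
      = ∑ γ ∈ Δ, (n β γ : ℝ) * cartanNumber γ α := by
        conv_lhs => rw [hΔ.eq_sum β hβ]
        exact cartanNumber_sum_smul Δ _ _ α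
    _ = ∑ γ ∈ insert α (dynkinNeighbors Δ α), (n β γ : ℝ) * cartanNumber γ α :=
        (Finset.sum_subset (insert_dynkinNeighbors_subset hα) off_support).symm
    _ = n β α * 2 + ∑ γ ∈ dynkinNeighbors Δ α, (n β γ : ℝ) * -1 := by
        rw [Finset.sum_insert notMem_dynkinNeighbors_self, cartanNumber_self (hΔ.ne_zero hα),
          Finset.sum_congr rfl fun γ hγ => by rw [hneighbor γ hγ]]
    _ = (2 * n β α - ∑ γ ∈ dynkinNeighbors Δ α, n β γ : ℤ) := by
        rw [← Finset.sum_mul]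
        push_cast
        ring

end DynkinNeighbors

theorem roots_of_q_height_two_general {E : Type*} [NormedAddCommGroup E] [InnerProductSpace ℝ E]
    {Φ : Set E} {Δ : Finset E} {n : E → E → ℤ} {α δ : E}
    (hΔ : IsSimpleSystem Φ Δ n) (hα : α ∈ Δ)
    (hrefl : ∀ β ∈ Φ, β - cartanNumber β α • α ∈ Φ)
    (hint : ∀ γ ∈ Δ, ∃ m : ℤ, cartanNumber γ α = m)
    (hlong : ∀ β ∈ Φ, ⟪β, α⟫ ≠ 0 → ‖β‖ ≤ ‖α‖)
    (hδ : δ ∈ Φ) (hheight : ∑ γ ∈ insert α (dynkinNeighbors Δ α), n δ γ = 2) :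
    n δ α = 1 ∧ ∑ γ ∈ dynkinNeighbors Δ α, n δ γ = 1 ∧ δ - α ∈ Φ := by
  have hneighbor : ∀ γ ∈ dynkinNeighbors Δ α, cartanNumber γ α = -1 := fun γ hγ => by
    obtain ⟨hγΔ, -, hinner⟩ := mem_dynkinNeighbors.mp hγ
    have hγΦ := hΔ.subset hγΔ
    exact hΔ.cartanNumber_eq_neg_one_of_mem_dynkinNeighbors hα hγ (hlong γ hγΦ hinner)
      (hrefl γ hγΦ) (hint γ hγΔ)
  rw [Finset.sum_insert notMem_dynkinNeighbors_self] at hheight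
  have cartan_eq : cartanNumber δ α = (3 * n δ α - 2 : ℤ) := by
    rw [hΔ.cartanNumber_eq_two_mul_coeff_sub_sum hα hneighbor hδ]
    congr 1
    omega
  -- `δ` is not orthogonal to `α`, because `3 * n δ α - 2` is never zero.
  have hnorm : ‖δ‖ ≤ ‖α‖ := hlong δ hδ fun horth => by
    rw [cartanNumber_eq_zero_of_inner_eq_zero horth] at cartan_eq
    norm_cast at cartan_eq
    omega
  have cartan_abs_le : |3 * n δ α - 2| ≤ 2 := by
    exact_mod_cast cartan_eq ▸ abs_cartanNumber_le_two hnorm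
  have coeff_ne_zero : n δ α ≠ 0 := fun hzero => by
    have heq : δ = -α := eq_neg_of_cartanNumber_eq_neg_two hnorm (by simp [cartan_eq, hzero])
    have := hΔ.coeff_neg_self hα (heq ▸ hδ)
    rw [← heq] at this
    omega
  have coeff_eq_one : n δ α = 1 := by
    rw [abs_le] at cartan_abs_le
    omega
  refine ⟨coeff_eq_one, by omega, ?_⟩
  simpa [cartan_eq, coeff_eq_one] using hrefl δ hδ

/-- Let `Φ` be the root system of a finite-dimensional complex simple Lie algebra
(an irreducible reduced crystallographic root system) with base `Δ`, and let `α ∈ Δ` be a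
long simple root; set `Σ_q := {α} ∪ N(α)` where `N(α)` is the set of Dynkin neighbors of
`α`.  Then every root `δ` with `ht_{Σ_q}(δ) = 2` satisfies `n_α(δ) = 1` and
`Σ_{γ∈N(α)} n_γ(δ) = 1`, and moreover `δ − α ∈ Φ`. -/
theorem roots_of_q_height_two
    {E : Type*} [NormedAddCommGroup E] [InnerProductSpace ℝ E]
    (Φ : Finset E)
    (hΦ0 : (0 : E) ∉ Φ)
    (hspan : Submodule.span ℝ (Φ : Set E) = ⊤)
    (hrefl : ∀ α ∈ Φ, ∀ β ∈ Φ, β - (2 * ⟪β, α⟫ / ⟪α, α⟫) • α ∈ Φ)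
    (hcrys : ∀ α ∈ Φ, ∀ β ∈ Φ, ∃ m : ℤ, 2 * ⟪β, α⟫ / ⟪α, α⟫ = (m : ℝ))
    (hred : ∀ α ∈ Φ, ∀ t : ℝ, t • α ∈ Φ → t = 1 ∨ t = -1)
    (hirr : ∀ S : Set E,
      (∀ β ∈ Φ, ∀ γ ∈ Φ, β ∈ S → ⟪β, γ⟫ ≠ 0 → γ ∈ S) →
      (∃ β ∈ Φ, β ∈ S) → ∀ β ∈ Φ, β ∈ S)
    (Δ : Finset E) (hΔΦ : (Δ : Set E) ⊆ (Φ : Set E))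
    (hΔli : LinearIndependent ℝ (fun γ : Δ => (γ : E)))
    (n : E → E → ℤ)
    (hn : ∀ β ∈ Φ, β = ∑ γ ∈ Δ, (n β γ : ℝ) • γ)
    (hsign : ∀ β ∈ Φ, (∀ γ ∈ Δ, 0 ≤ n β γ) ∨ (∀ γ ∈ Δ, n β γ ≤ 0))
    (α : E) (hαΔ : α ∈ Δ)
    (hlong : ∀ γ ∈ Φ, ⟪γ, γ⟫ ≤ ⟪α, α⟫)
    -- the Dynkin neighbors of `α`, the set `Σ_q = {α} ∪ N(α)` and the height `ht_{Σ_q}`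
    (Nbr : Finset E) (hNbr : Nbr = Δ.filter fun γ => γ ≠ α ∧ ⟪γ, α⟫ ≠ 0)
    (Sq : Finset E) (hSq : Sq = insert α Nbr)
    (htq : E → ℤ) (hhtq : ∀ β, htq β = ∑ γ ∈ Sq, n β γ)
    (δ : E) (hδ : δ ∈ Φ) (hδ2 : htq δ = 2) :
    n δ α = 1 ∧ (∑ γ ∈ Nbr, n δ γ) = 1 ∧ δ - α ∈ Φ := by
  subst hNbr hSq
  exact roots_of_q_height_two_general ⟨hΔΦ, hΔli, hn, hsign⟩ hαΔ (hrefl α (hΔΦ hαΔ))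
    (fun γ hγ => hcrys α (hΔΦ hαΔ) γ (hΔΦ hγ))
    (fun β hβ _ => norm_le_norm_of_inner_self_le (hlong β hβ)) hδ
    ((hhtq δ).symm.trans hδ2)
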